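/- arXiv:1603.09448 — 2 statements merged into one kernel-verified Lean document; each statement's English description precedes it below -/
import Mathlib

section
/- (Parity cancellation / Cut part of Cut&Count) Let R be a finite family of subsets of V(G), each containing a fixed vertex v₁, and let C = {(F, (F¹,F²)) : F ∈ R, (F¹,F²) is a consistent cut of F with v₁ ∈ F¹}. Then |C| ≡ |{F ∈ R : G[F] is connected}| (mod 2). -/
/-- `IsCut G v F p` says that `p` is a consistent cut of `F` with `v` on the first side. -/
def IsCut {V : Type*} (G : SimpleGraph V) (v : V) (F : Set V) (p : Set V × Set V) : Prop :=
  p.1 ∩ p.2 = ∅ ∧ p.1 ∪ p.2 = F ∧ (∀ u ∈ p.1, ∀ w ∈ p.2, ¬ G.Adj u w) ∧ v ∈ p.1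

/-- The vertices of `F` that are not reachable from `v` inside `G[F]`. -/
def unreachableIn {V : Type*} (G : SimpleGraph V) (v : V) (F : Set V) : Set V :=
  {u | ∃ hu : u ∈ F, ∀ hv : v ∈ F, ¬ (G.induce F).Reachable ⟨v, hv⟩ ⟨u, hu⟩}

theorem unreachableIn_subset {V : Type*} (G : SimpleGraph V) (v : V) (F : Set V) :
    unreachableIn G v F ⊆ F := fun _ hu => hu.1

theorem notMem_unreachableIn_self {V : Type*} (G : SimpleGraph V) {v : V} {F : Set V}
    (hv : v ∈ F) : v ∉ unreachableIn G v F :=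
  fun ⟨_, h⟩ => h hv (SimpleGraph.Reachable.refl _)

theorem not_adj_of_mem_unreachableIn {V : Type*} (G : SimpleGraph V) {v u w : V} {F : Set V}
    (hu : u ∈ F) (hu' : u ∉ unreachableIn G v F) (hw : w ∈ unreachableIn G v F) :
    ¬ G.Adj u w := by
  intro huw
  obtain ⟨hwF, hw⟩ := hw
  refine hu' ⟨hu, fun hv hr => hw hv (hr.trans ?_)⟩
  exact SimpleGraph.Adj.reachable (G := G.induce F) (u := ⟨u, hu⟩) (v := ⟨w, hwF⟩) huw

theorem unreachableIn_eq_empty_iff {V : Type*} (G : SimpleGraph V) {v : V} {F : Set V}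
    (hv : v ∈ F) : unreachableIn G v F = ∅ ↔ (G.induce F).Connected := by
  rw [Set.eq_empty_iff_forall_notMem, SimpleGraph.connected_iff_exists_forall_reachable]
  constructor
  · intro h
    refine ⟨⟨v, hv⟩, fun w => ?_⟩
    by_contra hw
    exact h w ⟨w.2, fun _ => hw⟩
  · rintro ⟨z, hz⟩ u ⟨hu, h⟩
    exact h hv ((hz _).symm.trans (hz _))

/-- Swapping sides on the unreachable part yields another consistent cut. -/
theorem IsCut.symmDiff {V : Type*} {G : SimpleGraph V} {v : V} {F : Set V} {p : Set V × Set V}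
    (h : IsCut G v F p) :
    IsCut G v F (symmDiff p.1 (unreachableIn G v F), symmDiff p.2 (unreachableIn G v F)) := by
  obtain ⟨A, B⟩ := p
  obtain ⟨hd, rfl, hc, hv⟩ := h
  dsimp only at hd hc hv ⊢
  have hK := unreachableIn_subset G v (A ∪ B)
  have hvK := notMem_unreachableIn_self G (Set.mem_union_left B hv)
  have hsep : ∀ u ∈ A ∪ B, u ∉ unreachableIn G v (A ∪ B) →
      ∀ w ∈ unreachableIn G v (A ∪ B), ¬ G.Adj u w :=
    fun u hu hu' w hw => not_adj_of_mem_unreachableIn G hu hu' hw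
  unfold IsCut
  generalize unreachableIn G v (A ∪ B) = K at *
  have hd' : ∀ x, x ∈ A → x ∉ B := fun x hA hB =>
    Set.notMem_empty x (hd ▸ ⟨hA, hB⟩)
  have hK' : ∀ x ∈ K, x ∈ A ∨ x ∈ B := fun x hx => hK hx
  simp only [Set.mem_symmDiff, Set.mem_union] at hsep ⊢
  refine ⟨?_, ?_, ?_, Or.inl ⟨hv, hvK⟩⟩
  · ext x
    have := hd' x
    have := hK' x
    simp only [Set.mem_inter_iff, Set.mem_symmDiff, Set.mem_empty_iff_false]
    tauto
  · ext x
    have := hd' x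
    have := hK' x
    simp only [Set.mem_union, Set.mem_symmDiff]
    tauto
  · intro u hu w hw huw
    have := hd' u
    have := hd' w
    have := hK' u
    have := hK' w
    have h1 := hsep u
    have h2 := hsep w
    have h3 := hc u
    have h4 := hc w
    have := huw.symm
    by_cases hu' : u ∈ K <;> by_cases hw' : w ∈ K <;> grind

/-- A connected candidate has only the trivial consistent cut. -/
theorem IsCut.eq_of_unreachableIn_eq_empty {V : Type*} {G : SimpleGraph V} {v : V} {F : Set V}
    {p : Set V × Set V} (h : IsCut G v F p) (hK : unreachableIn G v F = ∅) : p = (F, ∅) := by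
  obtain ⟨A, B⟩ := p
  obtain ⟨hd, rfl, hc, hv⟩ := h
  dsimp only at *
  have key : ∀ x : ↥(A ∪ B), (G.induce (A ∪ B)).Reachable ⟨v, Or.inl hv⟩ x → x.1 ∈ A := by
    rintro x ⟨q⟩
    have hmem : ∀ {a b : ↥(A ∪ B)}, (G.induce (A ∪ B)).Walk a b → a.1 ∈ A → b.1 ∈ A := by
      intro a b q
      induction q with
      | nil => exact id
      | @cons a c b hac _ ih =>
        intro ha
        exact ih (c.2.resolve_right fun hcB => hc _ ha _ hcB hac)
    exact hmem q hv
  have hB : B = ∅ := by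
    refine Set.eq_empty_iff_forall_notMem.2 fun x hx => ?_
    refine Set.eq_empty_iff_forall_notMem.1 hK x ⟨Or.inr hx, fun _ hr => ?_⟩
    exact Set.notMem_empty x (hd ▸ ⟨key _ hr, hx⟩)
  rw [hB, Set.union_empty]

theorem isCut_self_empty {V : Type*} (G : SimpleGraph V) {v : V} {F : Set V} (hv : v ∈ F) :
    IsCut G v F (F, ∅) :=
  ⟨Set.inter_empty F, Set.union_empty F, fun _ _ _ h => h.elim, hv⟩

/-- Cut part of Cut&Count: the number of pairs (candidate solution, consistent cut with
`v₁` on the first side) is congruent mod 2 to the number of candidate solutions `F`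
with `G[F]` connected. -/
theorem stmt7 {V : Type*} [Fintype V] (G : SimpleGraph V) (v₁ : V)
    (R : Finset (Set V)) (hR : ∀ F ∈ R, v₁ ∈ F) :
    Set.ncard {x : Set V × (Set V × Set V) | x.1 ∈ R ∧
      x.2.1 ∩ x.2.2 = ∅ ∧ x.2.1 ∪ x.2.2 = x.1 ∧
      (∀ u ∈ x.2.1, ∀ v ∈ x.2.2, ¬ G.Adj u v) ∧ v₁ ∈ x.2.1} ≡
    Set.ncard {F : Set V | F ∈ R ∧ (G.induce F).Connected} [MOD 2] := by
  classical
  change Set.ncard {x : Set V × (Set V × Set V) | x.1 ∈ R ∧ IsCut G v₁ x.1 x.2} ≡ _ [MOD 2]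
  let C := {x : Set V × (Set V × Set V) | x.1 ∈ R ∧ IsCut G v₁ x.1 x.2}
  let f : Function.End C := fun x => ⟨(x.1.1, symmDiff x.1.2.1 (unreachableIn G v₁ x.1.1),
    symmDiff x.1.2.2 (unreachableIn G v₁ x.1.1)), x.2.1, x.2.2.symmDiff⟩
  have hf : f ^ 2 ^ 1 = 1 := by
    rw [pow_one, pow_two]
    funext x
    apply Subtype.ext
    change (x.1.1, symmDiff (symmDiff x.1.2.1 _) _, symmDiff (symmDiff x.1.2.2 _) _) = x.1
    rw [symmDiff_symmDiff_cancel_right, symmDiff_symmDiff_cancel_right]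
  have hmod := Equiv.Perm.card_fixedPoints_modEq (p := 2) (n := 1) hf
  rw [← Nat.card_eq_fintype_card, ← Nat.card_eq_fintype_card] at hmod
  have hfix : ∀ x : C, x ∈ f.fixedPoints ↔ unreachableIn G v₁ x.1.1 = ∅ := by
    intro x
    constructor
    · intro hx
      have h1 : symmDiff x.1.2.1 (unreachableIn G v₁ x.1.1) = x.1.2.1 :=
        congrArg (fun y : C => y.1.2.1) hx
      exact symmDiff_eq_left.1 h1
    · intro hx
      apply Subtype.ext
      change (x.1.1, symmDiff x.1.2.1 _, symmDiff x.1.2.2 _) = x.1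
      rw [hx, ← Set.bot_eq_empty, symmDiff_bot, symmDiff_bot]
  let e : f.fixedPoints ≃ {F : Set V | F ∈ R ∧ (G.induce F).Connected} :=
    { toFun := fun x => ⟨x.1.1.1, x.1.2.1,
        (unreachableIn_eq_empty_iff G (hR _ x.1.2.1)).1 ((hfix _).1 x.2)⟩
      invFun := fun F => ⟨⟨(F.1, F.1, ∅), F.2.1, isCut_self_empty G (hR _ F.2.1)⟩,
        (hfix _).2 ((unreachableIn_eq_empty_iff G (hR _ F.2.1)).2 F.2.2)⟩
      left_inv := fun x => Subtype.ext <| Subtype.ext <| Prod.ext rfl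
        (x.1.2.2.eq_of_unreachableIn_eq_empty ((hfix _).1 x.2)).symm
      right_inv := fun _ => rfl }
  rw [Nat.card_congr e, Nat.card_coe_set_eq, Nat.card_coe_set_eq] at hmod
  exact hmod
end

section
/- (Isolation Lemma) Let F ⊆ 2^U be a nonempty family of subsets of a finite universe U. If for each u ∈ U a weight w(u) ∈ {1, 2, ..., N} is chosen uniformly and independently at random, then the probability that there is a unique S ∈ F minimizing w(S) = Σ_{u∈S} w(u) is at least 1 − |U|/N. -/
open Finset in
/-- If two weightings agree away from `u` and `w u < w' u`, then a minimizer for `w` avoiding `u`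
and a minimizer for `w'` containing `u` cannot both exist. -/
theorem mem_of_minimizer_of_lt {U : Type*} [DecidableEq U] {𝓕 : Finset (Finset U)} {w w' : U → ℕ}
    {u : U} (hww' : ∀ v, v ≠ u → w v = w' v) (hlt : w u < w' u) {S T : Finset U}
    (hS : S ∈ 𝓕) (hT : T ∈ 𝓕) (hTmin : ∀ R ∈ 𝓕, ∑ v ∈ T, w v ≤ ∑ v ∈ R, w v)
    (hSmin : ∀ R ∈ 𝓕, ∑ v ∈ S, w' v ≤ ∑ v ∈ R, w' v) (huS : u ∈ S) : u ∈ T := by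
  by_contra huT
  have hTeq : ∑ v ∈ T, w v = ∑ v ∈ T, w' v :=
    sum_congr rfl fun v hv => hww' v fun h => huT (h ▸ hv)
  have hSlt : ∑ v ∈ S, w v < ∑ v ∈ S, w' v := by
    refine sum_lt_sum (fun v _ => ?_) ⟨u, huS, hlt⟩
    by_cases h : v = u
    · exact h ▸ hlt.le
    · exact (hww' v h).le
  have h₁ := hTmin S hS
  have h₂ := hSmin T hT
  omega

/-- If the value at `u` of a member of `B` is determined by its other values, then `B` has density
at most `1 / card α` among all functions. -/
theorem card_mul_le_card_pow_of_eq_at {U α : Type*} [Fintype U] [DecidableEq U] [Fintype α]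
    (B : Finset (U → α)) (u : U)
    (hB : ∀ w ∈ B, ∀ w' ∈ B, (∀ v, v ≠ u → w v = w' v) → w u = w' u) :
    B.card * Fintype.card α ≤ Fintype.card α ^ Fintype.card U := by
  classical
  have h : (B ×ˢ (Finset.univ : Finset α)).card ≤ (Finset.univ : Finset (U → α)).card := by
    refine Finset.card_le_card_of_injOn (fun p => Function.update p.1 u p.2)
      (fun _ _ => Finset.mem_coe.2 (Finset.mem_univ _)) ?_
    rintro ⟨w, i⟩ hw ⟨w', j⟩ hw' heq
    have hw : w ∈ B := by simpa using hw
    have hw' : w' ∈ B := by simpa using hw'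
    have hoff : ∀ v, v ≠ u → w v = w' v := fun v hv => by simpa [hv] using congrFun heq v
    have hij : i = j := by simpa using congrFun heq u
    have hww' : w = w' := by
      funext v
      by_cases hv : v = u
      · exact hv ▸ hB w hw w' hw' hoff
      · exact hoff v hv
    rw [hww', hij]
  simpa [Finset.card_product] using h

/-- The minimizers of `w` over `𝓕` disagree about membership of `u`: some minimizer
contains `u` and some minimizer avoids it. -/
def AmbiguousAt {U : Type*} {N : ℕ} (𝓕 : Finset (Finset U)) (u : U) (w : U → Fin N) : Prop :=
  (∃ S ∈ 𝓕, (∀ R ∈ 𝓕, ∑ v ∈ S, ((w v : ℕ) + 1) ≤ ∑ v ∈ R, ((w v : ℕ) + 1)) ∧ u ∈ S) ∧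
  ∃ T ∈ 𝓕, (∀ R ∈ 𝓕, ∑ v ∈ T, ((w v : ℕ) + 1) ≤ ∑ v ∈ R, ((w v : ℕ) + 1)) ∧ u ∉ T

theorem AmbiguousAt.apply_eq {U : Type*} [DecidableEq U] {N : ℕ} {𝓕 : Finset (Finset U)} {u : U}
    {w w' : U → Fin N} (h : AmbiguousAt 𝓕 u w) (h' : AmbiguousAt 𝓕 u w')
    (hww' : ∀ v, v ≠ u → w v = w' v) : w u = w' u := by
  obtain ⟨⟨S, hS, hSmin, huS⟩, T, hT, hTmin, huT⟩ := h
  obtain ⟨⟨S', hS', hSmin', huS'⟩, T', hT', hTmin', huT'⟩ := h'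
  rcases lt_trichotomy (w u) (w' u) with hlt | heq | hlt
  · exact absurd (mem_of_minimizer_of_lt (w := fun v => (w v : ℕ) + 1)
      (w' := fun v => (w' v : ℕ) + 1) (fun v hv => by simp [hww' v hv])
      (Nat.add_lt_add_right hlt 1) hS' hT hTmin hSmin' huS') huT
  · exact heq
  · exact absurd (mem_of_minimizer_of_lt (w := fun v => (w' v : ℕ) + 1)
      (w' := fun v => (w v : ℕ) + 1) (fun v hv => by simp [hww' v hv])
      (Nat.add_lt_add_right hlt 1) hS hT' hTmin' hSmin huS) huT'

theorem exists_ambiguousAt_of_not_existsUnique {U : Type*} {N : ℕ} {𝓕 : Finset (Finset U)}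
    (h𝓕 : 𝓕.Nonempty) {w : U → Fin N}
    (hw : ¬ ∃! S : Finset U, S ∈ 𝓕 ∧ ∀ T ∈ 𝓕,
      ∑ u ∈ S, ((w u : ℕ) + 1) ≤ ∑ u ∈ T, ((w u : ℕ) + 1)) :
    ∃ u, AmbiguousAt 𝓕 u w := by
  obtain ⟨S, hS, hSmin⟩ := 𝓕.exists_min_image (fun S => ∑ u ∈ S, ((w u : ℕ) + 1)) h𝓕
  by_contra! hno
  refine hw ⟨S, ⟨hS, hSmin⟩, ?_⟩
  rintro T ⟨hT, hTmin⟩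
  ext u
  by_contra hu
  rw [not_iff] at hu
  by_cases huT : u ∈ T
  · exact hno u ⟨⟨T, hT, hTmin, huT⟩, S, hS, hSmin, fun h => hu.2 h huT⟩
  · exact hno u ⟨⟨S, hS, hSmin, hu.1 huT⟩, T, hT, hTmin, huT⟩

/-- Isolation Lemma: for a nonempty family `𝓕` of subsets of a finite universe `U`,
if each weight `w(u) ∈ {1,…,N}` is chosen uniformly and independently at random
(modelled by the uniform counting over all functions `U → Fin N`, with weight
`(w u) + 1 ∈ {1,…,N}`), the probability that a unique member of `𝓕` attains the
minimum weight is at least `1 − |U|/N`. -/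
theorem stmt8 {U : Type*} [Fintype U] [DecidableEq U] (N : ℕ) (hN : 0 < N)
    (𝓕 : Finset (Finset U)) (h𝓕 : 𝓕.Nonempty) :
    (1 - (Fintype.card U : ℝ) / N) ≤
      (Set.ncard {w : U → Fin N |
        ∃! S : Finset U, S ∈ 𝓕 ∧ ∀ T ∈ 𝓕,
          ∑ u ∈ S, ((w u : ℕ) + 1) ≤ ∑ u ∈ T, ((w u : ℕ) + 1)} : ℝ) /
      (N ^ Fintype.card U) := by
  classical
  set P : (U → Fin N) → Prop := fun w => ∃! S : Finset U, S ∈ 𝓕 ∧ ∀ T ∈ 𝓕,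
    ∑ u ∈ S, ((w u : ℕ) + 1) ≤ ∑ u ∈ T, ((w u : ℕ) + 1)
  have hgood : Set.ncard {w | P w} = (Finset.univ.filter P).card := by
    rw [← Set.ncard_coe_finset]
    simp
  have htotal : (Finset.univ.filter P).card + (Finset.univ.filter fun w => ¬ P w).card
      = N ^ Fintype.card U := by
    rw [Finset.card_filter_add_card_filter_not]
    simp
  have hbad : (Finset.univ.filter fun w => ¬ P w).card * N
      ≤ Fintype.card U * N ^ Fintype.card U := by
    have hsub : (Finset.univ.filter fun w => ¬ P w) ⊆
        Finset.univ.biUnion fun u => Finset.univ.filter (AmbiguousAt 𝓕 u) := fun w hw => by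
      simpa using exists_ambiguousAt_of_not_existsUnique h𝓕 (Finset.mem_filter.1 hw).2
    calc (Finset.univ.filter fun w => ¬ P w).card * N
        ≤ (∑ u : U, (Finset.univ.filter (AmbiguousAt (N := N) 𝓕 u)).card) * N :=
          Nat.mul_le_mul_right N ((Finset.card_le_card hsub).trans Finset.card_biUnion_le)
      _ = ∑ u : U, (Finset.univ.filter (AmbiguousAt (N := N) 𝓕 u)).card * N :=
          Finset.sum_mul _ _ _
      _ ≤ ∑ _u : U, N ^ Fintype.card U := by
          refine Finset.sum_le_sum fun u _ => ?_
          simpa using card_mul_le_card_pow_of_eq_at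
            (Finset.univ.filter (AmbiguousAt (N := N) 𝓕 u)) u fun w hw w' hw' =>
              (Finset.mem_filter.1 hw).2.apply_eq (Finset.mem_filter.1 hw').2
      _ = Fintype.card U * N ^ Fintype.card U := by simp
  change _ ≤ ((Set.ncard {w | P w} : ℕ) : ℝ) / _
  rw [hgood]
  have hNpos : (0 : ℝ) < N := by exact_mod_cast hN
  have htotal' : ((Finset.univ.filter P).card : ℝ) + (Finset.univ.filter fun w => ¬ P w).card
      = (N : ℝ) ^ Fintype.card U := by exact_mod_cast htotal
  have hbad' : ((Finset.univ.filter fun w => ¬ P w).card : ℝ) * N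
      ≤ Fintype.card U * (N : ℝ) ^ Fintype.card U := by exact_mod_cast hbad
  have hbad_le : ((Finset.univ.filter fun w => ¬ P w).card : ℝ)
      ≤ Fintype.card U / N * (N : ℝ) ^ Fintype.card U := by
    rw [div_mul_eq_mul_div, le_div_iff₀ hNpos]
    exact hbad'
  rw [le_div_iff₀ (pow_pos hNpos _)]
  linarith
end
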